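/- For complex α₁, α₂, α₃, α₄ with appropriate real parts ensuring convergence, ∑_{n≥1} σ_{α₁-α₂}(n)·σ_{1+α₁+α₂+α₃-α₄}(n)/n^{1+α₁+α₃} = ζ(1+α₁+α₃)·ζ(1+α₂+α₃)·ζ(α₄-α₁)·ζ(α₄-α₂)/ζ(1+α₃+α₄). -/

import Mathlib

/-- Divisor sum function with complex exponent: `σ_v(n) = ∑_{d ∣ n} d^v`. -/
noncomputable def csigma (v : ℂ) (n : ℕ) : ℂ := ∑ d ∈ n.divisors, (d : ℂ) ^ v

/-!
Let `F`, `G`, `H` be completely multiplicative. In `∑ₙ H(n) ∑_{d ∣ n} F(d) ∑_{e ∣ n} G(e)` exchange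
the sums: the `n` divisible by both `d` and `e` are the multiples of `lcm(d, e)`, so the series is
`∑ H` times `∑_{d,e} H(lcm(d, e)) F(d) G(e)`. Writing `(d, e) = (g p, g q)` with `p`, `q` coprime
gives `lcm(d, e) = g p q`, and the double series becomes `∑ F G H` times the sum of
`(F H)(p) (G H)(q)` over coprime pairs. The same substitution in the product of the series of `F H`
and `G H` shows that this coprime sum is their product divided by the series of `F H · G H`.
For powers of `n` all these series are zeta values.
-/

lemma pnat_gcd_mul_left (k m n : ℕ+) : (k * m).gcd (k * n) = k * m.gcd n :=
  PNat.eq (Nat.gcd_mul_left k m n)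

lemma pnat_lcm_mul_left_of_coprime (k : ℕ+) {m n : ℕ+} (h : m.Coprime n) :
    (k * m).lcm (k * n) = k * (m * n) :=
  PNat.eq <| by
    simp only [PNat.lcm_coe, PNat.mul_coe, Nat.lcm_mul_left, (PNat.coprime_coe.mpr h).lcm_eq_mul]

/-- The set of divisors of a positive integer, as a finset of positive integers. It replaces
`Nat.divisors` in sums of functions that are defined on `ℕ+` only. -/
def pnatDivisors (n : ℕ+) : Finset ℕ+ := {d ∈ Finset.Icc 1 n | (d : ℕ) ∣ n}

lemma mem_pnatDivisors {d n : ℕ+} : d ∈ pnatDivisors n ↔ d ∣ n := by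
  simpa [pnatDivisors, ← PNat.dvd_iff] using PNat.le_of_dvd

lemma map_coe_pnatDivisors (n : ℕ+) :
    (pnatDivisors n).map ⟨(↑), PNat.coe_injective⟩ = (n : ℕ).divisors := by
  ext d
  simp only [Finset.mem_map, mem_pnatDivisors, Function.Embedding.coeFn_mk, PNat.dvd_iff,
    Nat.mem_divisors, ne_eq, n.ne_zero, not_false_eq_true, and_true]
  refine ⟨?_, fun hd => ⟨⟨d, Nat.pos_of_dvd_of_pos hd n.pos⟩, hd, rfl⟩⟩
  rintro ⟨d, hd, rfl⟩
  exact hd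

/-- Pairs of coprime positive integers, the index set of the coprime double series. -/
abbrev CoprimePair : Type := {p : ℕ+ × ℕ+ // p.1.Coprime p.2}

/-- The bijection `(g, (p, q)) ↦ (g p, g q)`, whose inverse extracts the greatest common divisor. -/
noncomputable def gcdEquiv : ℕ+ × CoprimePair ≃ ℕ+ × ℕ+ :=
  Equiv.ofBijective (fun x => (x.1 * x.2.1.1, x.1 * x.2.1.2)) <| by
    constructor
    · rintro ⟨g, ⟨p, q⟩, hpq⟩ ⟨g', ⟨p', q'⟩, hpq'⟩ h
      obtain ⟨hp, hq⟩ := Prod.ext_iff.mp h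
      dsimp only at hp hq hpq hpq'
      obtain rfl : g = g' := by
        have hgcd := congrArg₂ PNat.gcd hp hq
        rwa [pnat_gcd_mul_left, pnat_gcd_mul_left, hpq, hpq', mul_one, mul_one] at hgcd
      obtain rfl := mul_left_cancel hp
      obtain rfl := mul_left_cancel hq
      rfl
    · rintro ⟨d, e⟩
      obtain ⟨p, hp⟩ := PNat.gcd_dvd_left d e
      obtain ⟨q, hq⟩ := PNat.gcd_dvd_right d e
      have hpq : p.gcd q = 1 := by
        have hgcd := pnat_gcd_mul_left (d.gcd e) p q
        rwa [← hp, ← hq, left_eq_mul] at hgcd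
      exact ⟨(d.gcd e, ⟨(p, q), hpq⟩), Prod.ext hp.symm hq.symm⟩

lemma gcdEquiv_apply (g : ℕ+) (p : CoprimePair) : gcdEquiv (g, p) = (g * p.1.1, g * p.1.2) :=
  rfl

/-- The map `(m, (d, e)) ↦ (m lcm(d, e), (d, e))`, which parametrizes the common multiples of `d`
and `e`. -/
def commonMultiple (y : ℕ+ × ℕ+ × ℕ+) : ℕ+ × ℕ+ × ℕ+ := (y.1 * y.2.1.lcm y.2.2, y.2)

lemma commonMultiple_injective : commonMultiple.Injective := by
  rintro ⟨m, x⟩ ⟨m', x'⟩ h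
  obtain ⟨hm, rfl⟩ := Prod.ext_iff.mp h
  exact Prod.ext (mul_right_cancel hm) rfl

lemma range_commonMultiple :
    Set.range commonMultiple = {y | y.2 ∈ pnatDivisors y.1 ×ˢ pnatDivisors y.1} := by
  ext ⟨n, d, e⟩
  simp only [Set.mem_range, Set.mem_ofPred_eq, Finset.mem_product, mem_pnatDivisors]
  constructor
  · rintro ⟨⟨m, _⟩, ⟨⟩⟩
    exact ⟨(PNat.dvd_lcm_left d e).mul_left m, (PNat.dvd_lcm_right d e).mul_left m⟩
  · rintro ⟨hd, he⟩
    obtain ⟨m, rfl⟩ := PNat.lcm_dvd hd he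
    exact ⟨(m, d, e), Prod.ext (mul_comm _ _) rfl⟩

section CompletelyMultiplicative

variable {R : Type*} [NormedCommRing R]

lemma summable_norm_mul_of_summable_norm {ι : Type*} {f g : ι → R}
    (hf : Summable (‖f ·‖)) (hg : Summable (‖g ·‖)) : Summable fun i => ‖f i * g i‖ :=
  (hf.mul_norm hg).comp_injective (i := fun i => (i, i)) fun _ _ h => congrArg Prod.fst h

lemma summable_norm_coprimePair {F G : ℕ+ → R} (hF : Summable (‖F ·‖)) (hG : Summable (‖G ·‖)) :
    Summable fun p : CoprimePair => ‖F p.1.1 * G p.1.2‖ :=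
  (hF.mul_norm hG).comp_injective Subtype.val_injective

/-- The double series `∑ F(p) G(q)` over the pairs of coprime positive integers `p`, `q`. -/
noncomputable def coprimeSeries (F G : ℕ+ → R) : R := ∑' p : CoprimePair, F p.1.1 * G p.1.2

lemma map_lcm_gcdEquiv_mul (F G H : ℕ+ →* R) (g : ℕ+) (p : CoprimePair) :
    H ((gcdEquiv (g, p)).1.lcm (gcdEquiv (g, p)).2) *
        (F (gcdEquiv (g, p)).1 * G (gcdEquiv (g, p)).2) =
      (F * G * H) g * ((F * H) p.1.1 * (G * H) p.1.2) := by
  simp only [gcdEquiv_apply, pnat_lcm_mul_left_of_coprime g p.2, map_mul, MonoidHom.mul_apply]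
  ring

lemma summable_norm_map_lcm_mul {F G H : ℕ+ →* R} (hFH : Summable fun n => ‖(F * H) n‖)
    (hGH : Summable fun n => ‖(G * H) n‖) (hFGH : Summable fun n => ‖(F * G * H) n‖) :
    Summable fun x : ℕ+ × ℕ+ => ‖H (x.1.lcm x.2) * (F x.1 * G x.2)‖ := by
  rw [← gcdEquiv.summable_iff]
  exact (hFGH.mul_norm (summable_norm_coprimePair hFH hGH)).congr fun x =>
    congrArg norm (map_lcm_gcdEquiv_mul F G H x.1 x.2).symm

variable [CompleteSpace R]

lemma tsum_mul_coprimeSeries {F G : ℕ+ →* R} (hF : Summable (‖F ·‖)) (hG : Summable (‖G ·‖)) :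
    (∑' n, (F * G) n) * coprimeSeries F G = (∑' n, F n) * ∑' n, G n := by
  simp only [MonoidHom.mul_apply]
  rw [coprimeSeries, tsum_mul_tsum_of_summable_norm (summable_norm_mul_of_summable_norm hF hG)
    (summable_norm_coprimePair hF hG), tsum_mul_tsum_of_summable_norm hF hG, ← gcdEquiv.tsum_eq]
  refine tsum_congr fun ⟨g, p⟩ => ?_
  rw [gcdEquiv_apply, map_mul, map_mul, mul_mul_mul_comm]

lemma tsum_map_lcm_mul {F G H : ℕ+ →* R} (hFH : Summable fun n => ‖(F * H) n‖)
    (hGH : Summable fun n => ‖(G * H) n‖) (hFGH : Summable fun n => ‖(F * G * H) n‖) :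
    ∑' x : ℕ+ × ℕ+, H (x.1.lcm x.2) * (F x.1 * G x.2) =
      (∑' n, (F * G * H) n) * coprimeSeries ⇑(F * H) ⇑(G * H) := by
  rw [coprimeSeries, tsum_mul_tsum_of_summable_norm hFGH (summable_norm_coprimePair hFH hGH),
    ← gcdEquiv.tsum_eq]
  exact tsum_congr fun x => map_lcm_gcdEquiv_mul F G H x.1 x.2

lemma hasSum_mul_of_summable_norm {ι κ : Type*} {f : ι → R} {g : κ → R}
    (hf : Summable (‖f ·‖)) (hg : Summable (‖g ·‖)) :
    HasSum (fun x : ι × κ => f x.1 * g x.2) ((∑' i, f i) * ∑' j, g j) :=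
  hf.of_norm.hasSum.mul hg.of_norm.hasSum (summable_mul_of_summable_norm hf hg)

lemma hasSum_mul_sum_pnatDivisors_product {H : ℕ+ →* R} {f : ℕ+ × ℕ+ → R}
    (hH : Summable (‖H ·‖)) (hf : Summable fun x : ℕ+ × ℕ+ => ‖H (x.1.lcm x.2) * f x‖) :
    HasSum (fun n => H n * ∑ x ∈ pnatDivisors n ×ˢ pnatDivisors n, f x)
      ((∑' n, H n) * ∑' x : ℕ+ × ℕ+, H (x.1.lcm x.2) * f x) := by
  classical
  have hparam : (fun y : ℕ+ × ℕ+ × ℕ+ => H y.1 * f y.2) ∘ commonMultiple =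
      fun y => H y.1 * (H (y.2.1.lcm y.2.2) * f y.2) := by
    ext y
    simp only [Function.comp_apply, commonMultiple, map_mul, mul_assoc]
  have hprod := hasSum_mul_of_summable_norm hH hf
  rw [← hparam] at hprod
  have hcommon := hasSum_subtype_iff_indicator.mp
    (commonMultiple_injective.hasSum_range_iff.mpr hprod)
  rw [range_commonMultiple] at hcommon
  refine hcommon.prod_fiberwise fun n => ?_
  simp only [Set.indicator_apply, Set.mem_ofPred_eq, Finset.mul_sum]
  rw [← Finset.sum_congr rfl fun x hx => if_pos hx]
  exact hasSum_sum_of_ne_finset_zero fun x hx => if_neg hx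

theorem hasSum_mul_sum_pnatDivisors_mul_sum_pnatDivisors {F G H : ℕ+ →* R}
    (hH : Summable (‖H ·‖)) (hFH : Summable fun n => ‖(F * H) n‖)
    (hGH : Summable fun n => ‖(G * H) n‖) (hFGH : Summable fun n => ‖(F * G * H) n‖) :
    HasSum (fun n => H n * ((∑ d ∈ pnatDivisors n, F d) * ∑ e ∈ pnatDivisors n, G e))
      ((∑' n, H n) * ((∑' n, (F * G * H) n) * coprimeSeries ⇑(F * H) ⇑(G * H))) := by
  simp only [Finset.sum_mul_sum, ← Finset.sum_product', ← tsum_map_lcm_mul hFH hGH hFGH]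
  exact hasSum_mul_sum_pnatDivisors_product hH (summable_norm_map_lcm_mul hFH hGH hFGH)

end CompletelyMultiplicative

/-- The completely multiplicative function `n ↦ n ^ s`, as a monoid homomorphism. On `ℕ` it would
have to be a homomorphism preserving zero, which fails for `s = 0` because `0 ^ 0 = 1`. -/
noncomputable def pnatCpow (s : ℂ) : ℕ+ →* ℂ where
  toFun n := (n : ℂ) ^ s
  map_one' := by simp
  map_mul' m n := by rw [PNat.mul_coe, Nat.cast_mul, Complex.natCast_mul_natCast_cpow]

lemma pnatCpow_apply (s : ℂ) (n : ℕ+) : pnatCpow s n = (n : ℂ) ^ s :=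
  rfl

lemma pnatCpow_mul_pnatCpow (s t : ℂ) : pnatCpow s * pnatCpow t = pnatCpow (s + t) :=
  MonoidHom.ext fun n => (Complex.cpow_add s t (Nat.cast_ne_zero.mpr n.ne_zero)).symm

lemma summable_norm_pnatCpow_neg {s : ℂ} (hs : 1 < s.re) :
    Summable fun n => ‖pnatCpow (-s) n‖ := by
  simpa [pnatCpow_apply, Function.comp_def, Complex.cpow_neg] using
    ((Complex.summable_one_div_nat_cpow.mpr hs).comp_injective PNat.coe_injective).norm

lemma tsum_pnatCpow_neg {s : ℂ} (hs : 1 < s.re) : ∑' n, pnatCpow (-s) n = riemannZeta s := by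
  rw [zeta_eq_tsum_one_div_nat_add_one_cpow hs]
  simpa [pnatCpow_apply, Complex.cpow_neg] using
    tsum_pnat_eq_tsum_succ (f := fun n : ℕ => (n : ℂ) ^ (-s))

lemma csigma_eq_sum_pnatDivisors (v : ℂ) (n : ℕ+) :
    csigma v n = ∑ d ∈ pnatDivisors n, pnatCpow v d := by
  rw [csigma, ← map_coe_pnatDivisors, Finset.sum_map]
  rfl

lemma coprimeSeries_pnatCpow_neg {s t : ℂ} (hs : 1 < s.re) (ht : 1 < t.re) :
    coprimeSeries (pnatCpow (-s)) (pnatCpow (-t)) =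
      riemannZeta s * riemannZeta t / riemannZeta (s + t) := by
  have hst : 1 < (s + t).re := by rw [Complex.add_re]; linarith
  have h := tsum_mul_coprimeSeries (summable_norm_pnatCpow_neg hs) (summable_norm_pnatCpow_neg ht)
  rw [pnatCpow_mul_pnatCpow, ← neg_add, tsum_pnatCpow_neg hst, tsum_pnatCpow_neg hs,
    tsum_pnatCpow_neg ht] at h
  rw [← h, mul_div_cancel_left₀ _ (riemannZeta_ne_zero_of_one_le_re hst.le)]

theorem hasSum_csigma_mul_csigma_div_cpow {a b s : ℂ} (hs : 1 < s.re) (ha : 1 < (s - a).re)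
    (hb : 1 < (s - b).re) (hab : 1 < (s - a - b).re) :
    HasSum (fun n : ℕ+ => csigma a n * csigma b n / (n : ℂ) ^ s)
      (riemannZeta s * riemannZeta (s - a) * riemannZeta (s - b) * riemannZeta (s - a - b) /
        riemannZeta (2 * s - a - b)) := by
  have twist (v t : ℂ) : pnatCpow v * pnatCpow (-t) = pnatCpow (-(t - v)) := by
    rw [pnatCpow_mul_pnatCpow, neg_sub, sub_eq_add_neg]
  have twist₂ : pnatCpow a * pnatCpow b * pnatCpow (-s) = pnatCpow (-(s - a - b)) := by
    rw [mul_assoc, twist, twist, sub_right_comm]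
  have hterm (n : ℕ+) : csigma a n * csigma b n / (n : ℂ) ^ s = pnatCpow (-s) n *
      ((∑ d ∈ pnatDivisors n, pnatCpow a d) * ∑ e ∈ pnatDivisors n, pnatCpow b e) := by
    rw [pnatCpow_apply, Complex.cpow_neg, div_eq_inv_mul, csigma_eq_sum_pnatDivisors,
      csigma_eq_sum_pnatDivisors]
  have hvalue : riemannZeta s * riemannZeta (s - a) * riemannZeta (s - b) *
        riemannZeta (s - a - b) / riemannZeta (2 * s - a - b) =
      riemannZeta s * (riemannZeta (s - a - b) *
        (riemannZeta (s - a) * riemannZeta (s - b) / riemannZeta (s - a + (s - b)))) := by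
    rw [show 2 * s - a - b = s - a + (s - b) by ring]
    ring
  have h := hasSum_mul_sum_pnatDivisors_mul_sum_pnatDivisors
    (F := pnatCpow a) (G := pnatCpow b) (H := pnatCpow (-s))
  rw [twist₂, twist, twist, tsum_pnatCpow_neg hs, tsum_pnatCpow_neg hab,
    coprimeSeries_pnatCpow_neg ha hb] at h
  simp only [hterm, hvalue]
  exact h (summable_norm_pnatCpow_neg hs) (summable_norm_pnatCpow_neg ha)
    (summable_norm_pnatCpow_neg hb) (summable_norm_pnatCpow_neg hab)

theorem ramanujan_specialized (α₁ α₂ α₃ α₄ : ℂ)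
    (h1 : 1 < (1 + α₁ + α₃).re) (h2 : 1 < (1 + α₂ + α₃).re)
    (h3 : 1 < (α₄ - α₂).re) (h4 : 1 < (α₄ - α₁).re) :
    ∑' n : ℕ+, csigma (α₁ - α₂) n * csigma (1 + α₁ + α₂ + α₃ - α₄) n
        / ((n : ℕ) : ℂ) ^ (1 + α₁ + α₃)
      = riemannZeta (1 + α₁ + α₃) * riemannZeta (1 + α₂ + α₃)
        * riemannZeta (α₄ - α₁) * riemannZeta (α₄ - α₂)
        / riemannZeta (1 + α₃ + α₄) := by
  have hs_sub_a : 1 + α₁ + α₃ - (α₁ - α₂) = 1 + α₂ + α₃ := by ring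
  have hs_sub_b : 1 + α₁ + α₃ - (1 + α₁ + α₂ + α₃ - α₄) = α₄ - α₂ := by ring
  have hs_sub_ab : 1 + α₂ + α₃ - (1 + α₁ + α₂ + α₃ - α₄) = α₄ - α₁ := by ring
  have hdenom : 2 * (1 + α₁ + α₃) - (α₁ - α₂) - (1 + α₁ + α₂ + α₃ - α₄) = 1 + α₃ + α₄ := by ring
  have h := hasSum_csigma_mul_csigma_div_cpow (a := α₁ - α₂) (b := 1 + α₁ + α₂ + α₃ - α₄) h1
  rw [hdenom, hs_sub_a, hs_sub_b, hs_sub_ab] at h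
  rw [(h h2 h3 h4).tsum_eq, mul_right_comm _ (riemannZeta (α₄ - α₂))]
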